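/- For every real n and every real x with x ≠ 1 and φ₁(x) ≠ 0, the identity φ₀(x)² − 8 φ₂(x) h₂(x) = (x − 2)·[(n−1)² x³ − 2(n−1)(n+5) x² + 4(5n−2) x − 8n] holds, where φ₀(x) = x(2n − (n−1)x), φ₁(x) = n − (n−1)x, φ₂(x) = (1−x)φ₁(x), and h₂(x) = −5/2 + x + (n+x)/(2φ₂(x)). Consequently, a point of the curve δ₄ = {(ℓ,h) : ℓ² = φ₀(x)²/φ₂(x), h = h₂(x)} lies on the parabola h = ℓ²/8 exactly when x = 2 or P(x) = 0, with P(x) = (n−1)² x³ − 2(n−1)(n+5) x² + 4(5n−2) x − 8n. -/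

import Mathlib

/-- The identity
`φ₀(x)² − 8 φ₂(x) h₂(x) = (x − 2)·[(n−1)² x³ − 2(n−1)(n+5) x² + 4(5n−2) x − 8n]`,
and the consequence: a point of the curve `δ₄` lies on the parabola `h = ℓ²/8`
exactly when `x = 2` or `P(x) = 0`. -/
theorem delta4_meets_parabola
    (n x : ℝ) (hx1 : x ≠ 1)
    (φ₀ φ₁ φ₂ h₂ P : ℝ → ℝ)
    (hφ₀ : ∀ s, φ₀ s = s * (2 * n - (n - 1) * s))
    (hφ₁ : ∀ s, φ₁ s = n - (n - 1) * s)
    (hφ₂ : ∀ s, φ₂ s = (1 - s) * φ₁ s)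
    (hh₂ : ∀ s, h₂ s = -5 / 2 + s + (n + s) / (2 * φ₂ s))
    (hP : ∀ s, P s = (n - 1) ^ 2 * s ^ 3 - 2 * (n - 1) * (n + 5) * s ^ 2
                      + 4 * (5 * n - 2) * s - 8 * n)
    (hφ₁x : φ₁ x ≠ 0) :
    φ₀ x ^ 2 - 8 * φ₂ x * h₂ x = (x - 2) * P x
    ∧ (∀ ℓ h : ℝ, ℓ ^ 2 = φ₀ x ^ 2 / φ₂ x → h = h₂ x →
        (h = ℓ ^ 2 / 8 ↔ (x = 2 ∨ P x = 0))) := by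
  have h1 : (1 - x) ≠ 0 := sub_ne_zero.mpr (Ne.symm hx1)
  have h2 : φ₂ x ≠ 0 := by
    rw [hφ₂]
    exact mul_ne_zero h1 hφ₁x
  have key : φ₂ x * h₂ x = φ₂ x * (-5 / 2 + x) + (n + x) / 2 := by
    rw [hh₂]
    field_simp
  have id1 : φ₀ x ^ 2 - 8 * φ₂ x * h₂ x = (x - 2) * P x := by
    have e : φ₀ x ^ 2 - 8 * φ₂ x * h₂ x = φ₀ x ^ 2 - 8 * (φ₂ x * h₂ x) := by ring
    rw [e, key, hφ₀, hφ₂, hφ₁, hP]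
    ring
  refine ⟨id1, ?_⟩
  intro ℓ h hl hh
  have e1 : h = ℓ ^ 2 / 8 ↔ (x - 2) * P x = 0 := by
    rw [← id1, hl, hh, div_div, eq_div_iff (mul_ne_zero h2 (by norm_num)), sub_eq_zero]
    constructor <;> intro H <;> linarith
  rw [e1, mul_eq_zero, sub_eq_zero]
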